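/- arXiv:2111.10699 — 2 statements merged into one kernel-verified Lean document; each statement's English description precedes it below -/
import Mathlib

section
/- Let G = (V,E) be a finite simple graph. Let OPT^STC be the minimum size |E_W| of an STC labeling of G, and let OPT^CD be the minimum number of cut edges over all partitions of V into cliques of G (the optimal cluster deletion value). Then OPT^STC ≤ OPT^CD ≤ 2·OPT^STC. -/
open Finset

/-- The finset of ordered pairs `(i, j)` with `i < j`, representing unordered pairs
of distinct elements of `V`. -/
def pairsLt (V : Type*) [Fintype V] [LinearOrder V] : Finset (V × V) :=
  Finset.univ.filter fun p => p.1 < p.2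

/-- `(i, j, k)` is an open wedge centered at `k`. -/
def IsOpenWedge {V : Type*} (G : SimpleGraph V) (i j k : V) : Prop :=
  G.Adj i k ∧ G.Adj j k ∧ i ≠ j ∧ ¬ G.Adj i j

/-- `C` is a partition of the vertex set into cliques of `G`. -/
def IsCliquePartition {V : Type*} (G : SimpleGraph V) (C : V → ℕ) : Prop :=
  ∀ i j, i ≠ j → C i = C j → G.Adj i j

/-- The number of cut edges of a partition `C`. -/
def cutEdges {V : Type*} [Fintype V] [LinearOrder V]
    (G : SimpleGraph V) [DecidableRel G.Adj] (C : V → ℕ) : ℕ :=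
  ((pairsLt V).filter fun p => G.Adj p.1 p.2 ∧ C p.1 ≠ C p.2).card

/-- `E_W` is an STC labeling of `G`: a set of edges such that every open wedge `(i,j,k)`
centered at `k` has `{i,k} ∈ E_W` or `{j,k} ∈ E_W`. -/
def IsSTCLabeling {V : Type*} (G : SimpleGraph V) (EW : Finset (Sym2 V)) : Prop :=
  (∀ e ∈ EW, e ∈ G.edgeSet) ∧
    (∀ i j k : V, IsOpenWedge G i j k → s(i, k) ∈ EW ∨ s(j, k) ∈ EW)

/-!
Both inequalities rest on viewing an STC labeling as a splitting of `G` into weak and strong edges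
in which any two strong neighbors of a vertex are adjacent. The cut edges of a clique partition
form such a labeling, because an open wedge cannot lie inside a clique.

Conversely, a labeling is rounded by repeatedly splitting off the cluster `K` formed by a pivot
`k` and its remaining strong neighbors, which is a clique. If a strong edge `{j, m}` leaves the
cluster of `k` at `j`, then `k` and `m` are both strong neighbors of `j`, so `{k, m}` is a weak
edge inside the cluster of `j`. Thus `(k, j, m) ↦ (j, k, m)` injects the strong edges leaving the
clusters, summed over all pivots, into the ordered weak pairs inside the clusters. Hence for some
pivot at most twice as many strong edges leave `K` as there are weak edges inside `K`. A weak edge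
inside `K` pays for two of these cut strong edges, and a cut weak edge pays for itself.
-/

section Interedges

variable {V : Type*}

theorem card_interedges_eq_add_sdiff_left {α β : Type*} [DecidableEq α] (r : α → β → Prop)
    [∀ a, DecidablePred (r a)] {s t : Finset α} (hts : t ⊆ s) (u : Finset β) :
    #(Rel.interedges r s u) = #(Rel.interedges r t u) + #(Rel.interedges r (s \ t) u) := by
  classical
  rw [← card_union_of_disjoint (Rel.interedges_disjoint_left r disjoint_sdiff u),
    Rel.interedges, Rel.interedges, Rel.interedges, ← filter_union, ← union_product,
    union_sdiff_of_subset hts]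

theorem card_interedges_eq_add_sdiff_right {α β : Type*} [DecidableEq β] (r : α → β → Prop)
    [∀ a, DecidablePred (r a)] {s t : Finset β} (hts : t ⊆ s) (u : Finset α) :
    #(Rel.interedges r u s) = #(Rel.interedges r u t) + #(Rel.interedges r u (s \ t)) := by
  classical
  rw [← card_union_of_disjoint (Rel.interedges_disjoint_right r u disjoint_sdiff),
    Rel.interedges, Rel.interedges, Rel.interedges, ← filter_union, ← product_union,
    union_sdiff_of_subset hts]

theorem card_interedges_self_eq_of_subset [DecidableEq V] (H : SimpleGraph V)
    [DecidableRel H.Adj] {A K : Finset V} (hKA : K ⊆ A) :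
    #(H.interedges A A) = #(H.interedges (A \ K) (A \ K)) + #(H.interedges K K)
      + 2 * #(H.interedges K (A \ K)) := by
  have := H.symm
  simp only [SimpleGraph.interedges]
  rw [card_interedges_eq_add_sdiff_left H.Adj hKA, card_interedges_eq_add_sdiff_right H.Adj hKA,
    card_interedges_eq_add_sdiff_right H.Adj hKA, Rel.card_interedges_comm (A \ K) K]
  ring

theorem card_interedges_le_add_sdiff (G S : SimpleGraph V) [DecidableRel G.Adj]
    [DecidableRel S.Adj] (A B : Finset V) :
    #(G.interedges A B) ≤ #(S.interedges A B) + #((G \ S).interedges A B) := by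
  classical
  refine (card_le_card fun p hp => ?_).trans (card_union_le _ _)
  simp only [mem_union, SimpleGraph.mem_interedges_iff, SimpleGraph.sdiff_adj] at hp ⊢
  tauto

theorem card_interedges_univ_univ [Fintype V] (H : SimpleGraph V) [DecidableRel H.Adj]
    [Fintype H.edgeSet] : #(H.interedges univ univ) = 2 * #H.edgeFinset := by
  rw [SimpleGraph.interedges_def, univ_product_univ]
  convert! H.two_mul_card_edgeFinset.symm

end Interedges

section CutGraph

variable {V ι : Type*}

/-- The graph formed by the edges of `G` whose endpoints receive different labels under `C`, that
is, by the cut edges of the partition of the vertices into the fibers of `C`. -/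
def cutGraph (G : SimpleGraph V) (C : V → ι) : SimpleGraph V where
  Adj u v := G.Adj u v ∧ C u ≠ C v
  symm.symm _ _ h := ⟨h.1.symm, h.2.symm⟩
  loopless.irrefl _ h := h.2 rfl

@[simp]
theorem cutGraph_adj {G : SimpleGraph V} {C : V → ι} {u v : V} :
    (cutGraph G C).Adj u v ↔ G.Adj u v ∧ C u ≠ C v :=
  Iff.rfl

theorem cutGraph_le (G : SimpleGraph V) (C : V → ι) : cutGraph G C ≤ G :=
  fun _ _ h => h.1

instance (G : SimpleGraph V) (C : V → ι) [DecidableRel G.Adj] [DecidableEq ι] :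
    DecidableRel (cutGraph G C).Adj :=
  fun u v => inferInstanceAs (Decidable (G.Adj u v ∧ C u ≠ C v))

theorem card_filter_pairsLt_adj [Fintype V] [LinearOrder V] (H : SimpleGraph V)
    [DecidableRel H.Adj] : #{p ∈ pairsLt V | H.Adj p.1 p.2} = #H.edgeFinset := by
  refine card_bij (fun p _ => s(p.1, p.2)) ?_ ?_ ?_
  · simp
  · rintro ⟨a, b⟩ hab ⟨c, d⟩ hcd heq
    simp only [pairsLt, mem_filter, mem_univ, true_and] at hab hcd
    rcases Sym2.eq_iff.1 heq with ⟨rfl, rfl⟩ | ⟨rfl, rfl⟩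
    · rfl
    · exact absurd hab.1 hcd.1.not_gt
  · refine Sym2.ind fun a b hab => ?_
    rw [SimpleGraph.mem_edgeFinset, SimpleGraph.mem_edgeSet] at hab
    rcases hab.ne.lt_or_gt with hlt | hgt
    · exact ⟨(a, b), by simp [pairsLt, hlt, hab], rfl⟩
    · exact ⟨(b, a), by simp [pairsLt, hgt, hab.symm], Sym2.eq_swap⟩

theorem cutEdges_eq_card_edgeFinset_cutGraph [Fintype V] [LinearOrder V] (G : SimpleGraph V)
    [DecidableRel G.Adj] (C : V → ℕ) : cutEdges G C = #(cutGraph G C).edgeFinset :=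
  card_filter_pairsLt_adj (cutGraph G C)

theorem IsCliquePartition.isSTCLabeling_edgeFinset_cutGraph {G : SimpleGraph V} {C : V → ℕ}
    [Fintype (cutGraph G C).edgeSet] (hC : IsCliquePartition G C) :
    IsSTCLabeling G (cutGraph G C).edgeFinset := by
  simp only [IsSTCLabeling, SimpleGraph.mem_edgeFinset]
  refine ⟨fun e he => SimpleGraph.edgeSet_mono (cutGraph_le G C) he, ?_⟩
  rintro i j k ⟨hik, hjk, hij, hnij⟩
  by_contra! hcut
  have hCik : C i = C k := by_contra fun hne => hcut.1 ⟨hik, hne⟩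
  have hCjk : C j = C k := by_contra fun hne => hcut.2 ⟨hjk, hne⟩
  exact hnij (hC i j hij (hCik.trans hCjk.symm))

end CutGraph

section AddCluster

variable {V : Type*} [DecidableEq V]

/-- The labeling obtained from `C` by making `K` a part of its own: `K` receives the label `0`, and
all labels outside `K` are shifted by one to keep `0` free. -/
def addCluster (K : Finset V) (C : V → ℕ) (v : V) : ℕ :=
  if v ∈ K then 0 else C v + 1

variable {G : SimpleGraph V} {A K : Finset V} {C : V → ℕ}

theorem pairwise_adj_addCluster (hK : G.IsClique K)
    (hC : (↑(A \ K) : Set V).Pairwise fun i j => C i = C j → G.Adj i j) :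
    (A : Set V).Pairwise fun i j => addCluster K C i = addCluster K C j → G.Adj i j := by
  intro i hi j hj hij heq
  by_cases hiK : i ∈ K <;> by_cases hjK : j ∈ K
  · exact hK hiK hjK hij
  · simp [addCluster, hiK, hjK] at heq
  · simp [addCluster, hiK, hjK] at heq
  · exact hC (mem_sdiff.2 ⟨hi, hiK⟩) (mem_sdiff.2 ⟨hj, hjK⟩) hij
      (by simpa [addCluster, hiK, hjK] using heq)

theorem card_interedges_cutGraph_addCluster [DecidableRel G.Adj] (hK : K ⊆ A) :
    #((cutGraph G (addCluster K C)).interedges A A)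
      = #((cutGraph G C).interedges (A \ K) (A \ K)) + 2 * #(G.interedges K (A \ K)) := by
  have houtside : (cutGraph G (addCluster K C)).interedges (A \ K) (A \ K)
      = (cutGraph G C).interedges (A \ K) (A \ K) := by
    ext p
    simp +contextual [SimpleGraph.mem_interedges_iff, addCluster]
  have hinside : (cutGraph G (addCluster K C)).interedges K K = ∅ := by
    ext p
    simp +contextual [SimpleGraph.mem_interedges_iff, addCluster]
  have hacross : (cutGraph G (addCluster K C)).interedges K (A \ K)
      = G.interedges K (A \ K) := by
    ext p
    simp +contextual [SimpleGraph.mem_interedges_iff, addCluster]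
  rw [card_interedges_self_eq_of_subset _ hK, houtside, hinside, hacross, card_empty, add_zero]

end AddCluster

section Pivot

variable {V : Type*}

/-- The cluster of the pivot `k` among the remaining vertices `A`: the closed neighborhood of `k`
in the graph `S` of strong edges, restricted to `A`. -/
def pivotCluster [DecidableEq V] (S : SimpleGraph V) [DecidableRel S.Adj] (A : Finset V) (k : V) :
    Finset V :=
  {v ∈ A | v = k ∨ S.Adj k v}

theorem pivotCluster_subset [DecidableEq V] (S : SimpleGraph V) [DecidableRel S.Adj]
    (A : Finset V) (k : V) : pivotCluster S A k ⊆ A :=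
  filter_subset _ _

variable {G S : SimpleGraph V} [DecidableRel S.Adj]

theorem isClique_pivotCluster [DecidableEq V] (hSG : S ≤ G) {k : V}
    (hS : G.IsClique (S.neighborSet k)) (A : Finset V) :
    G.IsClique (pivotCluster S A k : Set V) :=
  (hS.insert fun _ hv _ => hSG hv).subset fun _ hv => (mem_filter.1 hv).2

theorem exists_card_interedges_pivotCluster_le [DecidableEq V] [DecidableRel G.Adj]
    (hS : ∀ k, G.IsClique (S.neighborSet k)) {A : Finset V} (hA : A.Nonempty) :
    ∃ k ∈ A, #(S.interedges (pivotCluster S A k) (A \ pivotCluster S A k))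
      ≤ #((G \ S).interedges (pivotCluster S A k) (pivotCluster S A k)) := by
  refine exists_le_of_sum_le hA ?_
  rw [← card_sigma, ← card_sigma]
  refine card_le_card_of_injOn (fun t => ⟨t.2.1, t.1, t.2.2⟩) ?_ ?_
  · rintro ⟨k, j, m⟩ ht
    simp only [coe_sigma, Set.mem_sigma_iff, mem_coe, SimpleGraph.mem_interedges_iff, mem_sdiff,
      pivotCluster, mem_filter, not_and, not_or, SimpleGraph.sdiff_adj] at ht ⊢
    obtain ⟨hk, ⟨hj, hjk⟩, ⟨hm, hmK⟩, hjm⟩ := ht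
    obtain ⟨hmk, hnkm⟩ := hmK hm
    have hkj : S.Adj k j := hjk.resolve_left (by rintro rfl; exact hnkm hjm)
    have hGkm : G.Adj k m := hS j hkj.symm hjm (Ne.symm hmk)
    exact ⟨hj, ⟨hk, .inr hkj.symm⟩, ⟨hm, .inr hjm⟩, hGkm, hnkm⟩
  · rintro ⟨k₁, j₁, m₁⟩ - ⟨k₂, j₂, m₂⟩ - heq
    simp_all

theorem exists_pairwise_adj_card_interedges_cutGraph_le [DecidableRel G.Adj] (hSG : S ≤ G)
    (hS : ∀ k, G.IsClique (S.neighborSet k)) (A : Finset V) :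
    ∃ C : V → ℕ, ((A : Set V).Pairwise fun i j => C i = C j → G.Adj i j) ∧
      #((cutGraph G C).interedges A A) ≤ 2 * #((G \ S).interedges A A) := by
  classical
  induction A using Finset.strongInduction with
  | H A ih =>
  rcases A.eq_empty_or_nonempty with rfl | hA
  · exact ⟨0, by simp, by simp⟩
  obtain ⟨k, hk, hstrong⟩ := exists_card_interedges_pivotCluster_le hS hA
  have hKA := pivotCluster_subset S A k
  have hKclique := isClique_pivotCluster hSG (hS k) A
  have hkK : k ∈ pivotCluster S A k := by simp [pivotCluster, hk]
  generalize pivotCluster S A k = K at *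
  obtain ⟨C, hC, hcut⟩ := ih (A \ K) (sdiff_ssubset hKA ⟨k, hkK⟩)
  refine ⟨addCluster K C, pairwise_adj_addCluster hKclique hC, ?_⟩
  have hacross := card_interedges_le_add_sdiff G S K (A \ K)
  rw [card_interedges_cutGraph_addCluster hKA, card_interedges_self_eq_of_subset _ hKA]
  lia

theorem exists_isCliquePartition_card_edgeFinset_cutGraph_le [Fintype V] [DecidableEq V]
    [DecidableRel G.Adj] (hSG : S ≤ G) (hS : ∀ k, G.IsClique (S.neighborSet k)) :
    ∃ C : V → ℕ, IsCliquePartition G C ∧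
      #(cutGraph G C).edgeFinset ≤ 2 * #(G \ S).edgeFinset := by
  obtain ⟨C, hC, hcut⟩ := exists_pairwise_adj_card_interedges_cutGraph_le hSG hS univ
  rw [card_interedges_univ_univ, card_interedges_univ_univ] at hcut
  exact ⟨C, fun i j => hC (by simp) (by simp), by lia⟩

end Pivot

section STCLabeling

variable {V : Type*} {G : SimpleGraph V} {EW : Finset (Sym2 V)}

theorem IsSTCLabeling.isClique_neighborSet_deleteEdges (hEW : IsSTCLabeling G EW) (k : V) :
    G.IsClique ((G.deleteEdges EW).neighborSet k) := by
  intro i hi j hj hij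
  simp only [SimpleGraph.mem_neighborSet, SimpleGraph.deleteEdges_adj, mem_coe,
    Sym2.eq_swap (a := k)] at hi hj
  by_contra hnij
  rcases hEW.2 i j k ⟨hi.1.symm, hj.1.symm, hij, hnij⟩ with hik | hjk
  · exact hi.2 hik
  · exact hj.2 hjk

theorem IsSTCLabeling.exists_isCliquePartition_cutEdges_le [Fintype V] [LinearOrder V]
    [DecidableRel G.Adj] (hEW : IsSTCLabeling G EW) :
    ∃ C : V → ℕ, IsCliquePartition G C ∧ cutEdges G C ≤ 2 * #EW := by
  classical
  obtain ⟨C, hC, hcut⟩ := exists_isCliquePartition_card_edgeFinset_cutGraph_le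
    (G.deleteEdges_le EW) hEW.isClique_neighborSet_deleteEdges
  have hweak : (G \ G.deleteEdges EW).edgeFinset ⊆ EW := by
    refine Sym2.ind fun u v huv => ?_
    rw [SimpleGraph.mem_edgeFinset, SimpleGraph.mem_edgeSet, SimpleGraph.sdiff_adj,
      SimpleGraph.deleteEdges_adj] at huv
    exact not_not.1 fun hstrong => huv.2 ⟨huv.1, hstrong⟩
  refine ⟨C, hC, ?_⟩
  calc cutEdges G C = #(cutGraph G C).edgeFinset := cutEdges_eq_card_edgeFinset_cutGraph G C
    _ ≤ 2 * #(G \ G.deleteEdges EW).edgeFinset := hcut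
    _ ≤ 2 * #EW := Nat.mul_le_mul_left 2 (card_le_card hweak)

theorem isSTCLabeling_edgeFinset (G : SimpleGraph V) [Fintype G.edgeSet] :
    IsSTCLabeling G G.edgeFinset :=
  ⟨fun _ => SimpleGraph.mem_edgeFinset.1,
    fun _ _ _ hwedge => .inl (SimpleGraph.mem_edgeFinset.2 hwedge.1)⟩

end STCLabeling

/-- The optimal value of minSTC and the optimal cluster deletion value satisfy
`OPT^STC ≤ OPT^CD ≤ 2·OPT^STC`. -/
theorem stmt7 {V : Type*} [Fintype V] [LinearOrder V]
    (G : SimpleGraph V) [DecidableRel G.Adj] :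
    sInf {n : ℕ | ∃ EW : Finset (Sym2 V), IsSTCLabeling G EW ∧ n = EW.card}
      ≤ sInf {n : ℕ | ∃ C : V → ℕ, IsCliquePartition G C ∧ n = cutEdges G C} ∧
    sInf {n : ℕ | ∃ C : V → ℕ, IsCliquePartition G C ∧ n = cutEdges G C}
      ≤ 2 * sInf {n : ℕ | ∃ EW : Finset (Sym2 V), IsSTCLabeling G EW ∧ n = EW.card} := by
  obtain ⟨EW, hEW, hcard⟩ := Nat.sInf_mem
    (s := {n : ℕ | ∃ EW : Finset (Sym2 V), IsSTCLabeling G EW ∧ n = EW.card})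
    ⟨#G.edgeFinset, G.edgeFinset, isSTCLabeling_edgeFinset G, rfl⟩
  obtain ⟨C, hC, hcut⟩ := hEW.exists_isCliquePartition_cutEdges_le
  constructor
  · refine le_csInf ⟨cutEdges G C, C, hC, rfl⟩ ?_
    rintro _ ⟨D, hD, rfl⟩
    rw [cutEdges_eq_card_edgeFinset_cutGraph]
    exact Nat.sInf_le ⟨_, hD.isSTCLabeling_edgeFinset_cutGraph, rfl⟩
  · rw [hcard]
    exact le_trans (Nat.sInf_le ⟨C, hC, rfl⟩) hcut
end

section
/- Let G = (V,E) be a finite simple graph and let M be a collection of open wedges of G that is pairwise pair-disjoint: no unordered vertex pair belongs to two distinct wedges of M, where the pairs of a wedge (i,j,k) are {i,j}, {i,k}, {j,k}. Then every partition of V has at least |M| disagreements with respect to G. -/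
open Finset

/-- The number of disagreements of the partition `C` with respect to `G`. -/
def disagreements {V : Type*} [Fintype V] [LinearOrder V]
    (G : SimpleGraph V) [DecidableRel G.Adj] (C : V → ℕ) : ℕ :=
  ((pairsLt V).filter fun p =>
    (G.Adj p.1 p.2 ∧ C p.1 ≠ C p.2) ∨ (¬ G.Adj p.1 p.2 ∧ C p.1 = C p.2)).card

/-- The three unordered vertex pairs of a wedge `(i, j, k)`. -/
def wedgePairs {V : Type*} [DecidableEq V] (t : V × V × V) : Finset (Sym2 V) :=
  {s(t.1, t.2.1), s(t.1, t.2.2), s(t.2.1, t.2.2)}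

/-!
A partition can be viewed as a graph without open wedges, the disjoint union of the complete graphs
on its parts; its disagreements with `G` are then the edges of the symmetric difference of the two
graphs. An open wedge of `G` that is not an open wedge of the other graph contains an edge of this
symmetric difference, and wedges that share no pair contain different such edges.
-/

open scoped symmDiff

lemma encard_le_encard_of_pairwiseDisjoint {ι α : Type*} {s : Set ι} {f : ι → Finset α}
    {t : Set α} (hdisj : s.PairwiseDisjoint f) (hmeet : ∀ i ∈ s, ∃ a ∈ f i, a ∈ t) :
    s.encard ≤ t.encard := by
  choose g hg_mem hg_target using hmeet
  refine Function.Embedding.encard_le ⟨fun i => ⟨g i i.2, hg_target i i.2⟩, fun i j heq => ?_⟩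
  have hg_eq : g i i.2 = g j j.2 := congrArg Subtype.val heq
  exact Subtype.ext
    (hdisj.elim_finset i.2 j.2 (g i i.2) (hg_mem i i.2) (hg_eq ▸ hg_mem j j.2))

/-- The cluster graph of a partition, encoded as an equivalence relation `r`: two distinct vertices
are adjacent when they lie in the same part. The disagreements of the partition with a graph `G` are
the edges of `G ∆ clusterGraph r`. -/
def clusterGraph {V : Type*} (r : Setoid V) : SimpleGraph V where
  Adj a b := a ≠ b ∧ r a b
  symm := ⟨fun _ _ h => ⟨h.1.symm, r.symm h.2⟩⟩
  loopless := ⟨fun _ h => h.1 rfl⟩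

section Wedges

variable {V : Type*} {G H : SimpleGraph V}

lemma not_isOpenWedge_clusterGraph (r : Setoid V) (i j k : V) :
    ¬ IsOpenWedge (clusterGraph r) i j k :=
  fun ⟨hik, hjk, hij, hnij⟩ => hnij ⟨hij, r.trans hik.2 (r.symm hjk.2)⟩

variable [DecidableEq V]

lemma exists_mem_wedgePairs_mem_edgeSet_symmDiff {t : V × V × V}
    (hG : IsOpenWedge G t.1 t.2.1 t.2.2) (hH : ¬ IsOpenWedge H t.1 t.2.1 t.2.2) :
    ∃ e ∈ wedgePairs t, e ∈ (G ∆ H).edgeSet := by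
  obtain ⟨i, j, k⟩ := t
  obtain ⟨hik, hjk, hij, hnij⟩ := hG
  by_cases hHik : H.Adj i k
  · by_cases hHjk : H.Adj j k
    · have hHij : H.Adj i j := by
        by_contra hnHij
        exact hH ⟨hHik, hHjk, hij, hnHij⟩
      exact ⟨s(i, j), by simp [wedgePairs], Or.inr ⟨hHij, hnij⟩⟩
    · exact ⟨s(j, k), by simp [wedgePairs], Or.inl ⟨hjk, hHjk⟩⟩
  · exact ⟨s(i, k), by simp [wedgePairs], Or.inl ⟨hik, hHik⟩⟩

lemma encard_le_encard_edgeSet_symmDiff {M : Set (V × V × V)}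
    (hG : ∀ t ∈ M, IsOpenWedge G t.1 t.2.1 t.2.2)
    (hH : ∀ t ∈ M, ¬ IsOpenWedge H t.1 t.2.1 t.2.2)
    (hdisj : M.PairwiseDisjoint wedgePairs) :
    M.encard ≤ (G ∆ H).edgeSet.encard :=
  encard_le_encard_of_pairwiseDisjoint hdisj fun t ht =>
    exists_mem_wedgePairs_mem_edgeSet_symmDiff (hG t ht) (hH t ht)

end Wedges

section Counting

variable {V : Type*} [LinearOrder V]

lemma injOn_sym2Mk_setOf_lt : {p : V × V | p.1 < p.2}.InjOn fun p => s(p.1, p.2) := by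
  rintro ⟨a, b⟩ (hab : a < b) ⟨c, d⟩ (hcd : c < d) heq
  rcases Sym2.eq_iff.mp heq with ⟨rfl, rfl⟩ | ⟨rfl, rfl⟩
  · rfl
  · exact absurd hab hcd.asymm

lemma image_sym2Mk_setOf_lt_and_adj (G : SimpleGraph V) :
    (fun p : V × V => s(p.1, p.2)) '' {p | p.1 < p.2 ∧ G.Adj p.1 p.2} = G.edgeSet := by
  ext e
  induction e with | _ a b
  constructor
  · rintro ⟨p, ⟨-, hadj⟩, heq⟩
    exact heq ▸ hadj
  · intro (hadj : G.Adj a b)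
    rcases hadj.ne.lt_or_gt with hab | hba
    · exact ⟨(a, b), ⟨hab, hadj⟩, rfl⟩
    · exact ⟨(b, a), ⟨hba, hadj.symm⟩, Sym2.eq_swap⟩

lemma encard_setOf_lt_and_adj (G : SimpleGraph V) :
    {p : V × V | p.1 < p.2 ∧ G.Adj p.1 p.2}.encard = G.edgeSet.encard := by
  rw [← image_sym2Mk_setOf_lt_and_adj G,
    (injOn_sym2Mk_setOf_lt.mono fun _ hp => hp.1).encard_image]

lemma coe_disagreements [Fintype V] (G : SimpleGraph V) [DecidableRel G.Adj] (C : V → ℕ) :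
    (disagreements G C : ℕ∞) = (G ∆ clusterGraph (Setoid.ker C)).edgeSet.encard := by
  rw [← encard_setOf_lt_and_adj, disagreements, ← Set.encard_coe_eq_coe_finsetCard]
  congr 1
  ext ⟨a, b⟩
  have hadj (hab : a < b) : (G ∆ clusterGraph (Setoid.ker C)).Adj a b ↔
      (G.Adj a b ∧ C a ≠ C b) ∨ (¬ G.Adj a b ∧ C a = C b) := by
    change G.Adj a b ∧ ¬ (a ≠ b ∧ C a = C b) ∨ (a ≠ b ∧ C a = C b) ∧ ¬ G.Adj a b ↔ _
    simp only [hab.ne, ne_eq, not_false_eq_true, true_and, and_comm]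
  simpa [pairsLt] using fun hab => (hadj hab).symm

end Counting

theorem stmt9_general {V : Type*} [DecidableEq V] (G : SimpleGraph V) (M : Set (V × V × V))
    (hM : ∀ t ∈ M, IsOpenWedge G t.1 t.2.1 t.2.2) (hdisj : M.PairwiseDisjoint wedgePairs)
    (r : Setoid V) : M.encard ≤ (G ∆ clusterGraph r).edgeSet.encard :=
  encard_le_encard_edgeSet_symmDiff hM (fun _ _ => not_isOpenWedge_clusterGraph r _ _ _) hdisj

/-- A pair-disjoint collection of open wedges lower bounds the number of disagreements of
every partition. -/
theorem stmt9 {V : Type*} [Fintype V] [LinearOrder V]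
    (G : SimpleGraph V) [DecidableRel G.Adj]
    (M : Finset (V × V × V))
    (hM : ∀ t ∈ M, IsOpenWedge G t.1 t.2.1 t.2.2)
    (hdisj : ∀ t₁ ∈ M, ∀ t₂ ∈ M, t₁ ≠ t₂ → Disjoint (wedgePairs t₁) (wedgePairs t₂)) :
    ∀ C : V → ℕ, M.card ≤ disagreements G C := by
  intro C
  rw [← Nat.cast_le (α := ℕ∞), coe_disagreements, ← Set.encard_coe_eq_coe_finsetCard]
  exact stmt9_general G M hM hdisj (Setoid.ker C)
end
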